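/- arXiv:1510.01236 — 3 statements merged into one kernel-verified Lean document; each statement's English description precedes it below -/
import Mathlib

section
/- Let d and M be positive integers, λ > 0, T > 0, C ≥ 0, and let h : ℝ^d → ℝ^d be Lipschitz continuous with Lipschitz constant C (for the Euclidean norm). Let X be an ℕ-valued random variable with the Poisson distribution with parameter λT/M. Then for every real number p ≥ 1, every z ∈ {−1, 1} and every x ∈ ℝ^d with ‖x‖ ≥ 1, E[exp(p·z·⟨x, h(x)⟩·‖x‖^{−2}·(X − λT/M))] ≤ exp((e^{p(C+‖h(0)‖)} + p·(C + ‖h(0)‖))·λT/M). -/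
open MeasureTheory
open scoped RealInnerProductSpace

/-!
Put `b = p (C + ‖h 0‖)` and `a = p z ⟪x, h x⟫ / ‖x‖²`. The Lipschitz property gives
`‖h x‖ ≤ C ‖x‖ + ‖h 0‖ ≤ (C + ‖h 0‖) ‖x‖` because `‖x‖ ≥ 1`, so Cauchy–Schwarz yields `|a| ≤ b`.
For a Poisson variable of parameter `m` the exponential moment of the compensated variable is
`exp ((e^a - 1) m - a m)`, and `e^a - 1 - a ≤ e^b + b`.

The random variable is only known through the outer measures of its level sets, without a
measurability hypothesis. Therefore the expectation is bounded from above (which is all that is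
needed) by covering each level set with its measurable hull (`lintegral_comp_nat_le`).
-/

/-- Upper bound for the integral of a function of a discrete variable `X`; no measurability of `X`
is needed, since each level set may be replaced by a measurable hull of the same measure. -/
lemma lintegral_comp_nat_le {Ω : Type*} [MeasurableSpace Ω] (P : Measure Ω) (X : Ω → ℕ)
    (f : ℕ → ENNReal) :
    ∫⁻ ω, f (X ω) ∂P ≤ ∑' k, f k * P {ω | X ω = k} := by
  calc ∫⁻ ω, f (X ω) ∂P
      ≤ ∫⁻ ω, ∑' k, (toMeasurable P {ω | X ω = k}).indicator (fun _ => f k) ω ∂P := by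
        refine lintegral_mono fun ω => ?_
        have hmem : ω ∈ toMeasurable P {η | X η = X ω} := subset_toMeasurable P _ rfl
        refine le_trans ?_ (ENNReal.le_tsum (X ω))
        rw [Set.indicator_of_mem hmem]
    _ = ∑' k, f k * P {ω | X ω = k} := by
        rw [lintegral_tsum fun k =>
          (measurable_const.indicator (measurableSet_toMeasurable _ _)).aemeasurable]
        refine tsum_congr fun k => ?_
        rw [lintegral_indicator_const (measurableSet_toMeasurable _ _), measure_toMeasurable]

lemma hasSum_poisson_exp (a m : ℝ) :
    HasSum (fun k : ℕ => Real.exp (a * ((k : ℝ) - m)) *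
        (Real.exp (-m) * m ^ k / (Nat.factorial k)))
      (Real.exp ((Real.exp a - 1 - a) * m)) := by
  have hs := (NormedSpace.expSeries_div_hasSum_exp (Real.exp a * m)).mul_left
    (Real.exp (-(a * m)) * Real.exp (-m))
  rw [← Real.exp_eq_exp_ℝ, ← Real.exp_add, ← Real.exp_add] at hs
  convert! hs using 1
  · funext k
    rw [mul_pow, ← Real.exp_nat_mul, show a * ((k : ℝ) - m) = k * a + -(a * m) by ring,
      Real.exp_add, Real.exp_add]
    ring
  · congr 1
    ring

lemma integral_poisson_exp_le {Ω : Type*} [MeasurableSpace Ω] (P : Measure Ω) (X : Ω → ℕ)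
    (a m : ℝ) (hm : 0 ≤ m)
    (hX : ∀ k : ℕ, P {ω | X ω = k}
      = ENNReal.ofReal (Real.exp (-m) * m ^ k / (Nat.factorial k))) :
    ∫ ω, Real.exp (a * ((X ω : ℝ) - m)) ∂P ≤ Real.exp ((Real.exp a - 1 - a) * m) := by
  refine (Real.le_norm_self _).trans ((norm_integral_le_lintegral_norm _).trans ?_)
  refine ENNReal.toReal_le_of_le_ofReal (Real.exp_pos _).le ?_
  simp only [Real.norm_eq_abs, Real.abs_exp]
  refine (lintegral_comp_nat_le P X
    fun k => ENNReal.ofReal (Real.exp (a * ((k : ℝ) - m)))).trans ?_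
  have hs := hasSum_poisson_exp a m
  rw [← hs.tsum_eq, ENNReal.ofReal_tsum_of_nonneg (fun k => by positivity) hs.summable]
  refine le_of_eq (tsum_congr fun k => ?_)
  rw [hX k, ← ENNReal.ofReal_mul (Real.exp_pos _).le]

lemma abs_inner_div_sq_le {E : Type*} [NormedAddCommGroup E] [InnerProductSpace ℝ E]
    (h : E → E) (C : ℝ) (hLip : ∀ x y, ‖h x - h y‖ ≤ C * ‖x - y‖) (x : E) (hx : 1 ≤ ‖x‖) :
    |⟪x, h x⟫ / ‖x‖ ^ 2| ≤ C + ‖h 0‖ := by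
  have hx0 : 0 < ‖x‖ := one_pos.trans_le hx
  have hgrowth : ‖h x‖ ≤ (C + ‖h 0‖) * ‖x‖ := by
    have h1 := hLip x 0
    rw [sub_zero] at h1
    have h2 := norm_le_norm_sub_add (h x) (h 0)
    nlinarith [norm_nonneg (h 0)]
  rw [abs_div, abs_of_pos (pow_pos hx0 2), div_le_iff₀ (pow_pos hx0 2)]
  calc |⟪x, h x⟫| ≤ ‖x‖ * ‖h x‖ := abs_real_inner_le_norm _ _
    _ ≤ ‖x‖ * ((C + ‖h 0‖) * ‖x‖) := by gcongr
    _ = (C + ‖h 0‖) * ‖x‖ ^ 2 := by ring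

/-- If `h : ℝ^d → ℝ^d` is Lipschitz with constant `C`, `X` has the Poisson distribution
with parameter `λT/M`, then for `p ≥ 1`, `z ∈ {-1, 1}` and `‖x‖ ≥ 1`,
`E[exp (p z ⟨x, h x⟩ ‖x‖⁻² (X - λT/M))]
  ≤ exp ((e^{p(C+‖h 0‖)} + p (C + ‖h 0‖)) λT/M)`. -/
theorem poisson_taming_exp_bound (d M : ℕ) (hd : 0 < d) (hM : 0 < M)
    (lam T C : ℝ) (hlam : 0 < lam) (hT : 0 < T) (hC : 0 ≤ C)
    (h : EuclideanSpace ℝ (Fin d) → EuclideanSpace ℝ (Fin d))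
    (hLip : ∀ x y, ‖h x - h y‖ ≤ C * ‖x - y‖)
    {Ω : Type*} [MeasurableSpace Ω] (P : Measure Ω) [IsProbabilityMeasure P]
    (X : Ω → ℕ)
    (hX : ∀ k : ℕ, P {ω | X ω = k}
      = ENNReal.ofReal (Real.exp (-(lam * T / M)) * (lam * T / M) ^ k / (Nat.factorial k)))
    (p : ℝ) (hp : 1 ≤ p) (z : ℝ) (hz : z = -1 ∨ z = 1)
    (x : EuclideanSpace ℝ (Fin d)) (hx : 1 ≤ ‖x‖) :
    (∫ ω, Real.exp (p * z * (⟪x, h x⟫ / ‖x‖ ^ 2) * ((X ω : ℝ) - lam * T / M)) ∂P)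
      ≤ Real.exp ((Real.exp (p * (C + ‖h 0‖)) + p * (C + ‖h 0‖)) * (lam * T / M)) := by
  have hm : 0 ≤ lam * T / M := by positivity
  refine (integral_poisson_exp_le P X _ _ hm hX).trans ?_
  have ha : |p * z * (⟪x, h x⟫ / ‖x‖ ^ 2)| ≤ p * (C + ‖h 0‖) := by
    have hz1 : |z| = 1 := by rcases hz with rfl | rfl <;> simp
    rw [abs_mul, abs_mul, hz1, mul_one, abs_of_nonneg (by linarith : (0 : ℝ) ≤ p)]
    exact mul_le_mul_of_nonneg_left (abs_inner_div_sq_le h C hLip x hx) (by linarith)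
  obtain ⟨hlow, hup⟩ := abs_le.mp ha
  have hexp := Real.exp_le_exp.mpr hup
  refine Real.exp_le_exp.mpr (mul_le_mul_of_nonneg_right ?_ hm)
  linarith
end

section
/- Let a, b, c, λ, Δt, θ be real numbers with λ > 0, Δt > 0 and 0 ≤ θ ≤ 1; set A = a + λc and l = 2a + b² + λc(2 + c), and assume 1 − θΔtA ≠ 0. On a probability space, for each n ∈ ℕ let Y_n and ΔW_n be real random variables and ΔN_n an ℕ-valued random variable such that: ΔW_n has law gaussianReal 0 Δt; ΔN_n has the Poisson distribution with parameter λΔt; the three random variables Y_n, ΔW_n, ΔN_n are mutually independent; E[Y_n²] < ∞; and almost surely (1 − θΔtA)·Y_{n+1} = (1 + (1 − θ)ΔtA)·Y_n + b·Y_n·ΔW_n + c·Y_n·(ΔN_n − λΔt) (the compensated stochastic θ-method applied to the linear test equation). Set ρ = (1 + (2(1 − θ)A + b² + λc²)Δt + (1 − θ)²A²Δt²)/(1 − θΔtA)². Then E[Y_{n+1}²] = ρ·E[Y_n²] for every n, hence E[Y_n²] = ρⁿ·E[Y_0²]; moreover ρ < 1 if and only if (1 − 2θ)A²Δt < −l.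 In particular, if l < 0 and 1/2 ≤ θ ≤ 1 then ρ < 1, so the compensated stochastic θ-method is mean-square stable for every step size. -/
/-!
Squaring the recursion gives, almost surely,
`(1 - θΔtA)² Y_{n+1}² = Y_n² G²` with `G = α + b ΔW + c (ΔN - λΔt)` and `α = 1 + (1 - θ)ΔtA`.
By independence `E[Y_n² G²] = E[Y_n²] E[G²]`, and since `ΔW` and `ΔN - λΔt` are independent and
centred with variances `Δt` and `λΔt`, one gets `E[G²] = α² + b²Δt + c²λΔt`, which is the numerator
of `ρ`. The criterion `ρ < 1` is then elementary algebra: numerator minus denominator equals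
`Δt (l + (1 - 2θ)A²Δt)`.

No measurability is assumed of the random variables. For `ΔW` it follows from its law. For `ΔN` it
follows from the fact that the outer measures of the level sets add up to one
(`hasLaw_of_measure_fiber_eq`). For `Y_n` only the measurability of `Y_n²` is needed, and this is
part of its integrability.
-/

open MeasureTheory ProbabilityTheory

/-- A set whose outer measure and that of its complement add up to at most one in a probability
space is null-measurable: the measurable hulls of the two sets overlap in a null set. -/
lemma nullMeasurableSet_of_measure_add_compl_le {Ω : Type*} [MeasurableSpace Ω] {P : Measure Ω}
    [IsProbabilityMeasure P] {s : Set Ω} (h : P s + P sᶜ ≤ 1) : NullMeasurableSet s P := by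
  set T := toMeasurable P s with hT
  set T' := toMeasurable P sᶜ with hT'
  have hTm : MeasurableSet T := measurableSet_toMeasurable _ _
  have hT'm : MeasurableSet T' := measurableSet_toMeasurable _ _
  have hsT : s ⊆ T := subset_toMeasurable _ _
  have hsT' : sᶜ ⊆ T' := subset_toMeasurable _ _
  have hU : T ∪ T' = Set.univ := by
    ext x
    by_cases hx : x ∈ s
    · simp [hsT hx]
    · simp [hsT' hx]
  have hsum := measure_union_add_inter (μ := P) T hT'm
  rw [hU, measure_univ, hT, hT', measure_toMeasurable, measure_toMeasurable, ← hT, ← hT'] at hsum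
  have hzero : P (T ∩ T') = 0 := by
    rw [← hsum] at h
    have h' : (1 : ENNReal) + P (T ∩ T') ≤ 1 + 0 := by simpa using h
    exact le_antisymm ((ENNReal.add_le_add_iff_left ENNReal.one_ne_top).1 h') zero_le
  have hdiff : P (T \ s) = 0 :=
    measure_mono_null (fun x hx => Set.mem_inter hx.1 (hsT' hx.2)) hzero
  have hs : s = T \ (T \ s) := by
    rw [Set.sdiff_sdiff_right_self, Set.inter_eq_self_of_subset_right hsT]
  rw [hs]
  exact hTm.nullMeasurableSet.diff (NullMeasurableSet.of_null hdiff)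

/-- If the outer measures of the level sets of an `ℕ`-valued function are the point masses of a
probability measure `ν`, then the function is automatically a.e. measurable and has law `ν`. -/
lemma hasLaw_of_measure_fiber_eq {Ω : Type*} [MeasurableSpace Ω] {P : Measure Ω}
    [IsProbabilityMeasure P] {ν : Measure ℕ} [IsProbabilityMeasure ν] {N : Ω → ℕ}
    (h : ∀ k, P {ω | N ω = k} = ν {k}) : HasLaw N ν P := by
  -- Countable subadditivity bounds the outer measure of every preimage by `ν`.
  have hle : ∀ S : Set ℕ, P (N ⁻¹' S) ≤ ν S := by
    intro S
    calc P (N ⁻¹' S) = P (⋃ k : S, {ω | N ω = k}) := by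
          congr 1; ext ω; simp
      _ ≤ ∑' k : S, P {ω | N ω = k} := measure_iUnion_le _
      _ = ∑' k : S, ν {(k : ℕ)} := by simp_rw [h]
      _ = ν S := by
          have hS : S = ⋃ k : S, {(k : ℕ)} := by ext; simp
          conv_rhs => rw [hS]
          rw [measure_iUnion _ (fun _ => measurableSet_singleton _)]
          intro i j hij
          simpa [Function.onFun] using fun hh => hij (Subtype.ext hh)
  have hN : AEMeasurable N P := by
    refine NullMeasurable.aemeasurable fun S _ => nullMeasurableSet_of_measure_add_compl_le ?_
    calc P (N ⁻¹' S) + P (N ⁻¹' S)ᶜ ≤ ν S + ν Sᶜ := add_le_add (hle S) (hle Sᶜ)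
      _ = 1 := by rw [measure_add_measure_compl (MeasurableSet.of_discrete), measure_univ]
  refine ⟨hN, Measure.ext_of_singleton fun k => ?_⟩
  rw [Measure.map_apply_of_aemeasurable hN (measurableSet_singleton k), ← h k]
  rfl

lemma hasSum_poisson_mul_id (r : NNReal) :
    HasSum (fun n : ℕ => Real.exp (-r) * r ^ n / n.factorial * (n : ℝ)) r := by
  have h := (hasSum_one_poissonMeasure r).mul_left (r : ℝ)
  rw [← hasSum_nat_add_iff' 1]
  convert! h using 1
  · ext n
    have : (n.factorial : ℝ) ≠ 0 := by positivity
    rw [Nat.factorial_succ]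
    push_cast
    field_simp
    ring
  · simp

lemma hasSum_poisson_mul_sq (r : NNReal) :
    HasSum (fun n : ℕ => Real.exp (-r) * r ^ n / n.factorial * (n : ℝ) ^ 2) (r * (r + 1)) := by
  have h := ((hasSum_poisson_mul_id r).add (hasSum_one_poissonMeasure r)).mul_left (r : ℝ)
  rw [← hasSum_nat_add_iff' 1]
  convert! h using 1
  · ext n
    have : (n.factorial : ℝ) ≠ 0 := by positivity
    rw [Nat.factorial_succ]
    push_cast
    field_simp
    ring
  · simp

lemma memLp_two_poisson (r : NNReal) :
    MemLp (fun n : ℕ => (n : ℝ) - r) 2 (poissonMeasure r) := by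
  have h : MemLp (fun n : ℕ => (n : ℝ)) 2 (poissonMeasure r) := by
    rw [memLp_two_iff_integrable_sq .of_discrete, integrable_poissonMeasure_iff]
    convert! (hasSum_poisson_mul_sq r).summable using 2
    simp
  exact h.sub (memLp_const _)

lemma integral_poisson_centered (r : NNReal) :
    ∫ n : ℕ, ((n : ℝ) - r) ∂(poissonMeasure r) = 0 := by
  rw [integral_poissonMeasure]
  have h := (hasSum_poisson_mul_id r).sub ((hasSum_one_poissonMeasure r).mul_right (r : ℝ))
  convert! h.tsum_eq using 1
  · congr 1; ext n; simp only [smul_eq_mul]; ring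
  · ring

lemma integral_poisson_centered_sq (r : NNReal) :
    ∫ n : ℕ, ((n : ℝ) - r) ^ 2 ∂(poissonMeasure r) = r := by
  rw [integral_poissonMeasure]
  have h := ((hasSum_poisson_mul_sq r).sub ((hasSum_poisson_mul_id r).mul_right (2 * r : ℝ))).add
    ((hasSum_one_poissonMeasure r).mul_right ((r : ℝ) ^ 2))
  convert! h.tsum_eq using 1
  · congr 1; ext n; simp only [smul_eq_mul]; ring
  · ring

/-- Second moment of an affine combination of two independent centred square-integrable
variables. -/
lemma integral_affine_sq {Ω : Type*} [MeasurableSpace Ω] {P : Measure Ω} [IsProbabilityMeasure P]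
    {W M : Ω → ℝ} (hW : MemLp W 2 P) (hM : MemLp M 2 P) (hWM : IndepFun W M P)
    (hW0 : ∫ ω, W ω ∂P = 0) (hM0 : ∫ ω, M ω ∂P = 0) (α b c : ℝ) :
    ∫ ω, (α + b * W ω + c * M ω) ^ 2 ∂P
      = α ^ 2 + b ^ 2 * ∫ ω, W ω ^ 2 ∂P + c ^ 2 * ∫ ω, M ω ^ 2 ∂P := by
  have iW : Integrable W P := hW.integrable (by norm_num)
  have iM : Integrable M P := hM.integrable (by norm_num)
  have iW2 := hW.integrable_sq
  have iM2 := hM.integrable_sq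
  have iWM : Integrable (fun ω => W ω * M ω) P := hWM.integrable_mul iW iM
  have hWM0 : ∫ ω, W ω * M ω ∂P = 0 := by
    rw [hWM.integral_fun_mul_eq_mul_integral iW.1 iM.1, hW0, zero_mul]
  have hexp : ∀ ω, (α + b * W ω + c * M ω) ^ 2
      = α ^ 2 + b ^ 2 * W ω ^ 2 + c ^ 2 * M ω ^ 2 + (2 * α * b) * W ω + (2 * α * c) * M ω
        + (2 * b * c) * (W ω * M ω) := fun ω => by ring
  simp_rw [hexp]
  rw [integral_add (by fun_prop) (by fun_prop), integral_add (by fun_prop) (by fun_prop),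
    integral_add (by fun_prop) (by fun_prop), integral_add (by fun_prop) (by fun_prop),
    integral_add (by fun_prop) (by fun_prop)]
  simp only [integral_const_mul, hW0, hM0, hWM0, integral_const, probReal_univ, one_smul]
  ring

/-- Mean-square stability of the compensated stochastic θ-method for the linear jump
test equation: with `A = a + λc`, `l = 2a + b² + λc(2+c)` and
`ρ = (1 + (2(1-θ)A + b² + λc²)Δt + (1-θ)²A²Δt²)/(1 - θΔtA)²`, one has
`E[Y_{n+1}²] = ρ E[Y_n²]`, hence `E[Y_n²] = ρⁿ E[Y_0²]`; moreover `ρ < 1` iff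
`(1-2θ)A²Δt < -l`; in particular if `l < 0` and `1/2 ≤ θ ≤ 1` then `ρ < 1`. -/
theorem cstm_linear_mean_square_stability
    (a b c lam Δt θ : ℝ) (hlam : 0 < lam) (hΔt : 0 < Δt) (hθ0 : 0 ≤ θ) (hθ1 : θ ≤ 1)
    (A l : ℝ) (hA : A = a + lam * c) (hl : l = 2 * a + b ^ 2 + lam * c * (2 + c))
    (hdenom : 1 - θ * Δt * A ≠ 0)
    {Ω : Type*} [MeasurableSpace Ω] (P : Measure Ω) [IsProbabilityMeasure P]
    (Y W : ℕ → Ω → ℝ) (N : ℕ → Ω → ℕ)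
    (hWlaw : ∀ n, Measure.map (W n) P = gaussianReal 0 (Real.toNNReal Δt))
    (hNlaw : ∀ n (k : ℕ), P {ω | N n ω = k}
      = ENNReal.ofReal (Real.exp (-(lam * Δt)) * (lam * Δt) ^ k / (Nat.factorial k)))
    (hWN : ∀ n, IndepFun (W n) (N n) P)
    (hYWN : ∀ n, IndepFun (Y n) (fun ω => (W n ω, N n ω)) P)
    (hint : ∀ n, Integrable (fun ω => (Y n ω) ^ 2) P)
    (hrec : ∀ n, ∀ᵐ ω ∂P,
      (1 - θ * Δt * A) * Y (n + 1) ω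
        = (1 + (1 - θ) * Δt * A) * Y n ω + b * Y n ω * W n ω
          + c * Y n ω * ((N n ω : ℝ) - lam * Δt))
    (ρ : ℝ)
    (hρ : ρ = (1 + (2 * (1 - θ) * A + b ^ 2 + lam * c ^ 2) * Δt
        + (1 - θ) ^ 2 * A ^ 2 * Δt ^ 2) / (1 - θ * Δt * A) ^ 2) :
    (∀ n, (∫ ω, (Y (n + 1) ω) ^ 2 ∂P) = ρ * ∫ ω, (Y n ω) ^ 2 ∂P) ∧
    (∀ n, (∫ ω, (Y n ω) ^ 2 ∂P) = ρ ^ n * ∫ ω, (Y 0 ω) ^ 2 ∂P) ∧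
    (ρ < 1 ↔ (1 - 2 * θ) * A ^ 2 * Δt < -l) ∧
    (l < 0 → 1 / 2 ≤ θ → ρ < 1) := by
  have hD : 0 < (1 - θ * Δt * A) ^ 2 := by positivity
  have hstep : ∀ n, (∫ ω, (Y (n + 1) ω) ^ 2 ∂P) = ρ * ∫ ω, (Y n ω) ^ 2 ∂P := by
    intro n
    have hr : 0 ≤ lam * Δt := by positivity
    set r : NNReal := Real.toNNReal (lam * Δt) with hrdef
    have hrc : (r : ℝ) = lam * Δt := Real.coe_toNNReal _ hr
    have lawW : HasLaw (W n) (gaussianReal 0 (Real.toNNReal Δt)) P :=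
      ⟨aemeasurable_of_map_neZero (by rw [hWlaw n]; infer_instance), hWlaw n⟩
    have lawN : HasLaw (N n) (poissonMeasure r) P := by
      refine hasLaw_of_measure_fiber_eq fun k => ?_
      rw [hNlaw n k, poissonMeasure_singleton, hrc]
    have LW : MemLp (W n) 2 P := by
      have h := memLp_id_gaussianReal' (μ := 0) (v := Real.toNNReal Δt) 2 (by norm_num)
      rw [← hWlaw n] at h
      exact h.comp_of_map lawW.aemeasurable
    have LM : MemLp (fun ω => (N n ω : ℝ) - lam * Δt) 2 P := by
      have h := memLp_two_poisson r
      rw [← lawN.map_eq] at h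
      rw [← hrc]
      exact h.comp_of_map lawN.aemeasurable
    have W0 : ∫ ω, W n ω ∂P = 0 := by
      rw [lawW.integral_eq, integral_id_gaussianReal]
    have W2 : ∫ ω, W n ω ^ 2 ∂P = Δt := by
      have h := lawW.variance_eq
      rwa [variance_id_gaussianReal, variance_of_integral_eq_zero lawW.aemeasurable W0,
        Real.coe_toNNReal _ hΔt.le] at h
    have M0 : ∫ ω, ((N n ω : ℝ) - lam * Δt) ∂P = 0 := by
      rw [← hrc, ← integral_poisson_centered r]
      exact lawN.integral_comp (f := fun k : ℕ => (k : ℝ) - r) .of_discrete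
    have M2 : ∫ ω, ((N n ω : ℝ) - lam * Δt) ^ 2 ∂P = lam * Δt := by
      rw [← hrc]
      conv_rhs => rw [← integral_poisson_centered_sq r]
      exact lawN.integral_comp (f := fun k : ℕ => ((k : ℝ) - r) ^ 2) .of_discrete
    have hWM : IndepFun (W n) (fun ω => (N n ω : ℝ) - lam * Δt) P :=
      (hWN n).comp measurable_id (ψ := fun k : ℕ => (k : ℝ) - lam * Δt) .of_discrete
    have hG := integral_affine_sq LW LM hWM W0 M0 (1 + (1 - θ) * Δt * A) b c
    rw [W2, M2] at hG
    have hind : IndepFun (fun ω => Y n ω ^ 2) (fun ω => (1 + (1 - θ) * Δt * A + b * W n ω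
        + c * ((N n ω : ℝ) - lam * Δt)) ^ 2) P :=
      (hYWN n).comp (φ := fun y : ℝ => y ^ 2)
        (ψ := fun p : ℝ × ℕ => (1 + (1 - θ) * Δt * A + b * p.1
          + c * ((p.2 : ℝ) - lam * Δt)) ^ 2) (by fun_prop) (by fun_prop)
    have hGm : AEStronglyMeasurable (fun ω => (1 + (1 - θ) * Δt * A + b * W n ω
        + c * ((N n ω : ℝ) - lam * Δt)) ^ 2) P :=
      (((LW.1.const_mul b).const_add _).add (LM.1.const_mul c)).pow 2
    have hsq : ∫ ω, (1 - θ * Δt * A) ^ 2 * Y (n + 1) ω ^ 2 ∂P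
        = ∫ ω, Y n ω ^ 2 * (1 + (1 - θ) * Δt * A + b * W n ω
          + c * ((N n ω : ℝ) - lam * Δt)) ^ 2 ∂P := by
      refine integral_congr_ae ?_
      filter_upwards [hrec n] with ω hω
      rw [← mul_pow, hω]
      ring
    rw [hind.integral_fun_mul_eq_mul_integral (hint n).1 hGm, hG, integral_const_mul] at hsq
    rw [hρ, div_mul_eq_mul_div, eq_div_iff hD.ne', mul_comm, hsq]
    ring
  have hiff : ρ < 1 ↔ (1 - 2 * θ) * A ^ 2 * Δt < -l := by
    have key : (1 + (2 * (1 - θ) * A + b ^ 2 + lam * c ^ 2) * Δt + (1 - θ) ^ 2 * A ^ 2 * Δt ^ 2)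
        - (1 - θ * Δt * A) ^ 2 = Δt * (l + (1 - 2 * θ) * A ^ 2 * Δt) := by
      rw [hl, hA]; ring
    rw [hρ, div_lt_one hD, ← sub_neg, key]
    constructor <;> intro h <;> nlinarith
  refine ⟨hstep, fun n => ?_, hiff, fun hlneg hθ => hiff.2 ?_⟩
  · induction n with
    | zero => simp
    | succ k ih => rw [hstep k, ih, pow_succ]; ring
  · have : (1 - 2 * θ) * A ^ 2 * Δt ≤ 0 :=
      mul_nonpos_of_nonpos_of_nonneg
        (mul_nonpos_of_nonpos_of_nonneg (by linarith) (sq_nonneg A)) hΔt.le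
    linarith
end

section
/- Let a, b, c, λ, Δt be real numbers with λ > 0 and Δt > 0; set l = 2a + b² + λc(2 + c) and assume l < 0. On a probability space, for each n ∈ ℕ let X_n and ΔW_n be real random variables and ΔN_n an ℕ-valued random variable such that: ΔW_n has law gaussianReal 0 Δt; ΔN_n has the Poisson distribution with parameter λΔt; the three random variables X_n, ΔW_n, ΔN_n are mutually independent; E[X_n²] < ∞; and almost surely X_{n+1} = X_n + a·X_n·Δt/(1 + Δt·|a·X_n|) + b·X_n·ΔW_n + c·X_n·ΔN_n (the tamed Euler scheme applied to the linear test equation). Then: (i) if a(1 + λcΔt) ≤ 0, then for every n, E[X_{n+1}²] ≤ (1 + (a² + λ²c²)Δt² + (b² + λc(2 + c))Δt)·E[X_n²], and this factor is < 1 provided (a² + λ²c²)Δt < 2a − l; (ii) if a(1 + λcΔt) > 0, then for every n, E[X_{n+1}²] ≤ (1 + (a + λc)²Δt² + lΔt)·E[X_n²], and this factor is < 1 provided (a + λc)²Δt < −l. Consequently, under the corresponding step-size restriction the tamed Euler scheme is mean-square stable: there is a constant ρ < 1 with E[X_n²] ≤ ρⁿ·E[X_0²] for all n. -/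
open MeasureTheory ProbabilityTheory

/-!
Since `X_{n+1} = X_n (1 + g + S)` with `g = aΔt / (1 + Δt|a X_n|)` and `S = bΔW_n + cΔN_n`,
expanding the square gives
`X_{n+1}² = X_n² (1 + g)² + 2 X_n² (1 + g) S + X_n² S²`, where `X_n` and `g` enter only through
`|X_n|`. Independence factors the expectations, and `E[S] = cλΔt`,
`E[S²] = b²Δt + c²(λΔt + (λΔt)²)` (lemma `integral_tamed_step`). It remains to bound
`g² + 2g(1 + cλΔt)` pointwise: `g = aΔtθ` with `0 < θ ≤ 1`, so `g² ≤ a²Δt²`, while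
`g(1 + cλΔt)` is at most `0` or at most `aΔt(1 + cλΔt)` according to the sign of
`a(1 + λcΔt)`.

Measurability is not a hypothesis and has to be recovered. The counts `N n` are a.e.-measurable
because the outer measures of their level sets add up to `1`
(`aemeasurable_of_tsum_measure_fiber`), and only `|X n| = √(X n ²)`, not `X n`, is needed.
-/

/-- If the outer measures of the fibres of an `ℕ`-valued map add up to the total mass `1`, the
fibres are null-measurable: each is squeezed between the complement of the measurable hulls of the
other fibres and its own measurable hull, and these two have the same measure. -/
lemma aemeasurable_of_tsum_measure_fiber {Ω : Type*} [MeasurableSpace Ω] (P : Measure Ω)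
    [IsProbabilityMeasure P] (N : Ω → ℕ) (h : ∑' k, P {ω | N ω = k} = 1) :
    AEMeasurable N P := by
  have hfib : ∀ k, NullMeasurableSet {ω | N ω = k} P := by
    intro k
    choose B hBsub hBm hBP using fun j : ℕ => exists_measurable_superset P {ω | N ω = j}
    obtain ⟨C, hC⟩ : ∃ C : Set Ω, C = ⋃ j, (if j = k then ∅ else B j) := ⟨_, rfl⟩
    have hCm : MeasurableSet C := by
      rw [hC]
      refine MeasurableSet.iUnion fun j => ?_
      split_ifs
      · exact MeasurableSet.empty
      · exact hBm j
    have hsub1 : Cᶜ ⊆ {ω | N ω = k} := by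
      intro ω hω
      by_contra hne
      have hne' : ¬ N ω = k := hne
      refine hω ?_
      rw [hC]
      refine Set.mem_iUnion.2 ⟨N ω, ?_⟩
      rw [if_neg hne']
      exact hBsub (N ω) rfl
    have hsub2 : {ω | N ω = k} ⊆ B k := hBsub k
    have hCle : P C ≤ ∑' j, (if j = k then 0 else P {ω | N ω = j}) := by
      rw [hC]
      refine (measure_iUnion_le _).trans (ENNReal.tsum_le_tsum fun j => ?_)
      by_cases hj : j = k
      · simp [hj]
      · rw [if_neg hj, if_neg hj]
        exact (hBP j).le
    have hsum : P {ω | N ω = k} + ∑' j, (if j = k then 0 else P {ω | N ω = j}) = 1 := by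
      have hk := ENNReal.tsum_eq_add_tsum_ite (f := fun j => P {ω | N ω = j}) k
      rw [h] at hk
      convert hk.symm using 5
    have hle : P (B k) ≤ P Cᶜ := by
      have h1 : P Cᶜ + P C = 1 := by
        rw [add_comm, measure_add_measure_compl hCm, measure_univ]
      have hfin : ∑' j, (if j = k then 0 else P {ω | N ω = j}) ≠ ⊤ := by
        intro htop
        rw [htop] at hsum
        simp at hsum
      rw [hBP k]
      refine (ENNReal.add_le_add_iff_right hfin).1 ?_
      rw [hsum, ← h1]
      gcongr
    have heq : (Cᶜ : Set Ω) =ᵐ[P] B k :=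
      ae_eq_of_subset_of_measure_ge (hsub1.trans hsub2) hle hCm.compl.nullMeasurableSet
        (measure_ne_top _ _)
    have heq2 : (Cᶜ : Set Ω) =ᵐ[P] {ω | N ω = k} :=
      Filter.EventuallyLE.antisymm (LE.le.eventuallyLE hsub1)
        ((LE.le.eventuallyLE hsub2).trans heq.symm.le)
    exact hCm.compl.nullMeasurableSet.congr heq2
  refine NullMeasurable.aemeasurable fun s _ => ?_
  have : N ⁻¹' s = ⋃ k ∈ s, {ω | N ω = k} := by
    ext ω
    simp
  rw [this]
  exact NullMeasurableSet.biUnion s.to_countable fun k _ => hfib k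

lemma hasSum_poisson_first (r : NNReal) :
    HasSum (fun n : ℕ => Real.exp (-r) * (r : ℝ) ^ n / (n.factorial : ℝ) * (n : ℝ)) r := by
  rw [← hasSum_nat_add_iff' 1]
  have h := (hasSum_one_poissonMeasure r).mul_left (r : ℝ)
  convert! h using 1
  · ext n
    rw [Nat.factorial_succ]
    push_cast
    field_simp
    ring
  · simp

lemma hasSum_poisson_second (r : NNReal) :
    HasSum (fun n : ℕ => Real.exp (-r) * (r : ℝ) ^ n / (n.factorial : ℝ) * (n : ℝ) ^ 2)
      (r + r ^ 2) := by
  rw [← hasSum_nat_add_iff' 1]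
  have h := ((hasSum_one_poissonMeasure r).add (hasSum_poisson_first r)).mul_left (r : ℝ)
  convert! h using 1
  · ext n
    rw [Nat.factorial_succ]
    push_cast
    field_simp
    ring
  · simp
    ring

/-- The first two moments of a variable given by its Poisson point probabilities. -/
lemma poisson_moments {Ω : Type*} [MeasurableSpace Ω] (P : Measure Ω)
    [IsProbabilityMeasure P] (N : Ω → ℕ) (r : ℝ) (hr : 0 < r)
    (hN : ∀ k : ℕ, P {ω | N ω = k}
      = ENNReal.ofReal (Real.exp (-r) * r ^ k / (Nat.factorial k))) :
    AEMeasurable N P ∧ MemLp (fun ω => (N ω : ℝ)) 2 P ∧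
      ∫ ω, (N ω : ℝ) ∂P = r ∧ ∫ ω, (N ω : ℝ) ^ 2 ∂P = r + r ^ 2 := by
  lift r to NNReal using hr.le
  have hmeas : AEMeasurable N P := by
    apply aemeasurable_of_tsum_measure_fiber
    simp_rw [hN]
    rw [← ENNReal.ofReal_tsum_of_nonneg (fun _ => by positivity)
      (hasSum_one_poissonMeasure r).summable, (hasSum_one_poissonMeasure r).tsum_eq,
      ENNReal.ofReal_one]
  have hmap : P.map N = poissonMeasure r := by
    refine Measure.ext_of_singleton fun k => ?_
    rw [Measure.map_apply_of_aemeasurable hmeas (measurableSet_singleton k),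
      poissonMeasure_singleton, ← hN]
    rfl
  have hmeasR : AEMeasurable (fun ω => (N ω : ℝ)) P :=
    (measurable_of_countable (fun k : ℕ => (k : ℝ))).comp_aemeasurable hmeas
  have hsq : Integrable (fun ω => (N ω : ℝ) ^ 2) P := by
    have h : Integrable (fun k : ℕ => (k : ℝ) ^ 2) (P.map N) := by
      rw [hmap, integrable_poissonMeasure_iff]
      simpa using (hasSum_poisson_second r).summable
    exact h.comp_aemeasurable hmeas
  refine ⟨hmeas, (memLp_two_iff_integrable_sq hmeasR.aestronglyMeasurable).2 hsq, ?_, ?_⟩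
  · rw [← integral_map (f := fun k : ℕ => (k : ℝ)) hmeas .of_discrete, hmap,
      integral_poissonMeasure]
    exact (hasSum_poisson_first r).tsum_eq
  · rw [← integral_map (f := fun k : ℕ => (k : ℝ) ^ 2) hmeas .of_discrete, hmap,
      integral_poissonMeasure]
    exact (hasSum_poisson_second r).tsum_eq

lemma gaussian_moments {Ω : Type*} [MeasurableSpace Ω] (P : Measure Ω)
    (W : Ω → ℝ) (v : ℝ) (hv : 0 < v)
    (hW : P.map W = gaussianReal 0 (Real.toNNReal v)) :
    MemLp W 2 P ∧ ∫ ω, W ω ∂P = 0 ∧ ∫ ω, (W ω) ^ 2 ∂P = v := by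
  have hmeas : AEMeasurable W P := aemeasurable_of_map_neZero (by rw [hW]; infer_instance)
  have hLp : MemLp W 2 P := by
    have h : MemLp id 2 (P.map W) := by
      rw [hW]
      exact memLp_id_gaussianReal 2
    exact h.comp_of_map hmeas
  refine ⟨hLp, ?_, ?_⟩
  · rw [← integral_map (f := fun x : ℝ => x) hmeas (by fun_prop), hW, integral_id_gaussianReal]
  · rw [← integral_map (f := fun x : ℝ => x ^ 2) hmeas (by fun_prop), hW]
    have h := variance_fun_id_gaussianReal (μ := 0) (v := Real.toNNReal v)
    rw [variance_eq_integral (by fun_prop), integral_id_gaussianReal] at h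
    simpa [hv.le] using h

/-- Moments of the noise `S = bW + cN`. -/
lemma noise_moments {Ω : Type*} [MeasurableSpace Ω] (P : Measure Ω)
    [IsProbabilityMeasure P] (W : Ω → ℝ) (N : Ω → ℕ) (b c v r : ℝ) (hv : 0 < v) (hr : 0 < r)
    (hW : P.map W = gaussianReal 0 (Real.toNNReal v))
    (hN : ∀ k : ℕ, P {ω | N ω = k}
      = ENNReal.ofReal (Real.exp (-r) * r ^ k / (Nat.factorial k)))
    (hWN : IndepFun W N P) :
    MemLp (fun ω => b * W ω + c * (N ω : ℝ)) 2 P ∧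
      ∫ ω, (b * W ω + c * (N ω : ℝ)) ∂P = c * r ∧
      ∫ ω, (b * W ω + c * (N ω : ℝ)) ^ 2 ∂P = b ^ 2 * v + c ^ 2 * (r + r ^ 2) := by
  obtain ⟨hWL, hW1, hW2⟩ := gaussian_moments P W v hv hW
  obtain ⟨-, hNL, hN1, hN2⟩ := poisson_moments P N r hr hN
  have hind : IndepFun W (fun ω => (N ω : ℝ)) P :=
    hWN.comp measurable_id (measurable_of_countable (fun k : ℕ => (k : ℝ)))
  have hWi := hWL.integrable one_le_two
  have hNi := hNL.integrable one_le_two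
  have hprod : Integrable (fun ω => W ω * (N ω : ℝ)) P := hind.integrable_mul hWi hNi
  have hprod0 : ∫ ω, W ω * (N ω : ℝ) ∂P = 0 := by
    rw [hind.integral_fun_mul_eq_mul_integral hWL.1 hNL.1, hW1, zero_mul]
  refine ⟨(hWL.const_mul b).add (hNL.const_mul c), ?_, ?_⟩
  · rw [integral_add (hWi.const_mul b) (hNi.const_mul c), integral_const_mul,
      integral_const_mul, hW1, hN1]
    ring
  · have hexp : ∀ ω, (b * W ω + c * (N ω : ℝ)) ^ 2
        = b ^ 2 * W ω ^ 2 + c ^ 2 * (N ω : ℝ) ^ 2 + 2 * b * c * (W ω * (N ω : ℝ)) := by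
      intro ω
      ring
    simp_rw [hexp]
    have i1 := hWL.integrable_sq.const_mul (b ^ 2)
    have i2 := hNL.integrable_sq.const_mul (c ^ 2)
    have i12 : Integrable (fun ω => b ^ 2 * W ω ^ 2 + c ^ 2 * (N ω : ℝ) ^ 2) P := i1.add i2
    rw [integral_add i12 (hprod.const_mul _), integral_add i1 i2,
      integral_const_mul, integral_const_mul, integral_const_mul, hW2, hN2, hprod0]
    ring

/-- The tamed drift factor: one step of the drift maps `x` to `x * (1 + tamedFactor a Δt |x|)`.
It is written as a function of `y = |x|`. -/
noncomputable def tamedFactor (a Δt y : ℝ) : ℝ := a * Δt / (1 + Δt * (|a| * y))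

lemma tamedFactor_eq (a Δt y : ℝ) (hΔt : 0 < Δt) (hy : 0 ≤ y) :
    ∃ θ : ℝ, 0 ≤ θ ∧ θ ≤ 1 ∧ tamedFactor a Δt y = a * Δt * θ := by
  refine ⟨(1 + Δt * (|a| * y))⁻¹, by positivity, ?_, div_eq_mul_inv _ _⟩
  exact inv_le_one_of_one_le₀ (by linarith [show 0 ≤ Δt * (|a| * y) by positivity])

lemma measurable_tamedFactor (a Δt : ℝ) : Measurable (tamedFactor a Δt) := by
  unfold tamedFactor
  fun_prop

/-- If the conditional mean-square growth factor is bounded by `K` pointwise, then one step of the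
scheme multiplies the second moment by at most `K`. -/
lemma integral_tamed_step {Ω : Type*} [MeasurableSpace Ω] (P : Measure Ω)
    [IsProbabilityMeasure P] (X X' W : Ω → ℝ) (N : Ω → ℕ) (a b c Δt r K : ℝ)
    (hΔt : 0 < Δt) (hr : 0 < r)
    (hW : P.map W = gaussianReal 0 (Real.toNNReal Δt))
    (hN : ∀ k : ℕ, P {ω | N ω = k}
      = ENNReal.ofReal (Real.exp (-r) * r ^ k / (Nat.factorial k)))
    (hWN : IndepFun W N P) (hXWN : IndepFun X (fun ω => (W ω, N ω)) P)
    (hint : Integrable (fun ω => X ω ^ 2) P)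
    (hrec : ∀ᵐ ω ∂P, X' ω = X ω + a * X ω * Δt / (1 + Δt * |a * X ω|)
        + b * X ω * W ω + c * X ω * (N ω : ℝ))
    (hK : ∀ θ : ℝ, 0 ≤ θ → θ ≤ 1 →
      (1 + a * Δt * θ) ^ 2 + 2 * (c * r) * (1 + a * Δt * θ)
        + (b ^ 2 * Δt + c ^ 2 * (r + r ^ 2)) ≤ K) :
    ∫ ω, X' ω ^ 2 ∂P ≤ K * ∫ ω, X ω ^ 2 ∂P := by
  obtain ⟨hSL, hS1, hS2⟩ := noise_moments P W N b c Δt r hΔt hr hW hN hWN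
  set S : Ω → ℝ := fun ω => b * W ω + c * (N ω : ℝ) with hS
  have hSi := hSL.integrable one_le_two
  have hSsq := hSL.integrable_sq
  have hYm : AEMeasurable (fun ω => |X ω|) P := by
    have h := hint.aestronglyMeasurable.aemeasurable.sqrt
    simpa only [Real.sqrt_sq_eq_abs] using h
  set G : Ω → ℝ := fun ω => tamedFactor a Δt |X ω| with hG
  have hGm : AEMeasurable G P := (measurable_tamedFactor a Δt).comp_aemeasurable hYm
  have hGb : ∀ ω, |1 + G ω| ≤ 1 + |a| * Δt := by
    intro ω
    obtain ⟨θ, h0, h1, he⟩ := tamedFactor_eq a Δt |X ω| hΔt (abs_nonneg _)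
    have : |G ω| ≤ |a| * Δt := by
      simp only [hG, he, abs_mul, abs_of_pos hΔt, abs_of_nonneg h0]
      exact mul_le_of_le_one_right (by positivity) h1
    calc |1 + G ω| ≤ |1| + |G ω| := abs_add_le _ _
      _ ≤ 1 + |a| * Δt := by rw [abs_one]; linarith
  have hI1 : Integrable (fun ω => X ω ^ 2 * (1 + G ω)) P :=
    hint.mul_bdd (c := 1 + |a| * Δt) (hGm.const_add 1).aestronglyMeasurable
      (Filter.Eventually.of_forall hGb)
  have hI2 : Integrable (fun ω => X ω ^ 2 * (1 + G ω) ^ 2) P := by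
    have h := hI1.mul_bdd (c := 1 + |a| * Δt) (hGm.const_add 1).aestronglyMeasurable
      (Filter.Eventually.of_forall hGb)
    refine h.congr (Filter.Eventually.of_forall fun ω => ?_)
    ring
  have hSmeas : Measurable (fun p : ℝ × ℕ => b * p.1 + c * (p.2 : ℝ)) := by
    have : Measurable (fun p : ℝ × ℕ => (p.2 : ℝ)) :=
      (measurable_of_countable (fun k : ℕ => (k : ℝ))).comp measurable_snd
    fun_prop
  have hφ1 : Measurable (fun x : ℝ => x ^ 2 * (1 + tamedFactor a Δt |x|)) := by
    have : Measurable (fun x : ℝ => tamedFactor a Δt |x|) :=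
      (measurable_tamedFactor a Δt).comp measurable_norm
    fun_prop
  have ind1 : IndepFun (fun ω => X ω ^ 2 * (1 + G ω)) S P := hXWN.comp hφ1 hSmeas
  have ind2 : IndepFun (fun ω => X ω ^ 2) (fun ω => S ω ^ 2) P :=
    hXWN.comp (φ := fun x : ℝ => x ^ 2) (by fun_prop) (hSmeas.pow_const 2)
  have hJ1 : Integrable (fun ω => X ω ^ 2 * (1 + G ω) * S ω) P := ind1.integrable_mul hI1 hSi
  have hJ2 : Integrable (fun ω => X ω ^ 2 * S ω ^ 2) P := ind2.integrable_mul hint hSsq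
  have hexp : ∫ ω, X' ω ^ 2 ∂P = ∫ ω, (X ω ^ 2 * (1 + G ω) ^ 2
      + 2 * (X ω ^ 2 * (1 + G ω) * S ω) + X ω ^ 2 * S ω ^ 2) ∂P := by
    refine integral_congr_ae ?_
    filter_upwards [hrec] with ω hω
    have : X' ω = X ω * (1 + G ω + S ω) := by
      rw [hω]
      simp only [hG, hS, tamedFactor, abs_mul]
      ring
    rw [this]
    ring
  have hval : ∫ ω, X' ω ^ 2 ∂P = ∫ ω, (X ω ^ 2 * (1 + G ω) ^ 2
      + 2 * (c * r) * (X ω ^ 2 * (1 + G ω))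
      + (b ^ 2 * Δt + c ^ 2 * (r + r ^ 2)) * X ω ^ 2) ∂P := by
    have i1 : Integrable (fun ω => X ω ^ 2 * (1 + G ω) ^ 2
        + 2 * (X ω ^ 2 * (1 + G ω) * S ω)) P := hI2.add (hJ1.const_mul 2)
    have i2 : Integrable (fun ω => X ω ^ 2 * (1 + G ω) ^ 2
        + 2 * (c * r) * (X ω ^ 2 * (1 + G ω))) P := hI2.add (hI1.const_mul _)
    rw [hexp, integral_add i1 hJ2, integral_add hI2 (hJ1.const_mul 2),
      integral_add i2 (hint.const_mul _),
      integral_add hI2 (hI1.const_mul _), integral_const_mul, integral_const_mul,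
      integral_const_mul, ind1.integral_fun_mul_eq_mul_integral hI1.1 hSi.1,
      ind2.integral_fun_mul_eq_mul_integral hint.1 hSsq.1, hS1, hS2]
    ring
  rw [hval, ← integral_const_mul]
  refine integral_mono ((hI2.add (hI1.const_mul _)).add (hint.const_mul _))
    (hint.const_mul _) fun ω => ?_
  obtain ⟨θ, h0, h1, he⟩ := tamedFactor_eq a Δt |X ω| hΔt (abs_nonneg _)
  have hb := mul_le_mul_of_nonneg_right (hK θ h0 h1) (sq_nonneg (X ω))
  simp only [hG, he]
  linarith

/-- Mean-square stability of the tamed Euler scheme for the linear jump test equation: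
with `l = 2a + b² + λc(2+c) < 0`, (i) if `a(1 + λcΔt) ≤ 0` then
`E[X_{n+1}²] ≤ (1 + (a² + λ²c²)Δt² + (b² + λc(2+c))Δt) E[X_n²]`, the factor being `< 1`
when `(a² + λ²c²)Δt < 2a - l`; (ii) if `a(1 + λcΔt) > 0` then
`E[X_{n+1}²] ≤ (1 + (a + λc)²Δt² + lΔt) E[X_n²]`, the factor being `< 1` when
`(a + λc)²Δt < -l`. Consequently, under the corresponding step-size restriction there
is `ρ < 1` with `E[X_n²] ≤ ρⁿ E[X_0²]`. -/
theorem tamed_linear_mean_square_stability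
    (a b c lam Δt : ℝ) (hlam : 0 < lam) (hΔt : 0 < Δt)
    (l : ℝ) (hl : l = 2 * a + b ^ 2 + lam * c * (2 + c)) (hlneg : l < 0)
    {Ω : Type*} [MeasurableSpace Ω] (P : Measure Ω) [IsProbabilityMeasure P]
    (X W : ℕ → Ω → ℝ) (N : ℕ → Ω → ℕ)
    (hWlaw : ∀ n, Measure.map (W n) P = gaussianReal 0 (Real.toNNReal Δt))
    (hNlaw : ∀ n (k : ℕ), P {ω | N n ω = k}
      = ENNReal.ofReal (Real.exp (-(lam * Δt)) * (lam * Δt) ^ k / (Nat.factorial k)))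
    (hWN : ∀ n, IndepFun (W n) (N n) P)
    (hXWN : ∀ n, IndepFun (X n) (fun ω => (W n ω, N n ω)) P)
    (hint : ∀ n, Integrable (fun ω => (X n ω) ^ 2) P)
    (hrec : ∀ n, ∀ᵐ ω ∂P,
      X (n + 1) ω = X n ω + a * X n ω * Δt / (1 + Δt * |a * X n ω|)
        + b * X n ω * W n ω + c * X n ω * (N n ω : ℝ)) :
    ((a * (1 + lam * c * Δt) ≤ 0 → ∀ n,
      (∫ ω, (X (n + 1) ω) ^ 2 ∂P)
        ≤ (1 + (a ^ 2 + lam ^ 2 * c ^ 2) * Δt ^ 2 + (b ^ 2 + lam * c * (2 + c)) * Δt)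
            * ∫ ω, (X n ω) ^ 2 ∂P) ∧
    ((a ^ 2 + lam ^ 2 * c ^ 2) * Δt < 2 * a - l →
      1 + (a ^ 2 + lam ^ 2 * c ^ 2) * Δt ^ 2 + (b ^ 2 + lam * c * (2 + c)) * Δt < 1)) ∧
    ((0 < a * (1 + lam * c * Δt) → ∀ n,
      (∫ ω, (X (n + 1) ω) ^ 2 ∂P)
        ≤ (1 + (a + lam * c) ^ 2 * Δt ^ 2 + l * Δt) * ∫ ω, (X n ω) ^ 2 ∂P) ∧
    ((a + lam * c) ^ 2 * Δt < -l →
      1 + (a + lam * c) ^ 2 * Δt ^ 2 + l * Δt < 1)) ∧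
    (((a * (1 + lam * c * Δt) ≤ 0 ∧ (a ^ 2 + lam ^ 2 * c ^ 2) * Δt < 2 * a - l) ∨
      (0 < a * (1 + lam * c * Δt) ∧ (a + lam * c) ^ 2 * Δt < -l)) →
      ∃ ρ : ℝ, 0 ≤ ρ ∧ ρ < 1 ∧
        ∀ n, (∫ ω, (X n ω) ^ 2 ∂P) ≤ ρ ^ n * ∫ ω, (X 0 ω) ^ 2 ∂P) := by
  have hr : 0 < lam * Δt := mul_pos hlam hΔt
  have hθsq : ∀ θ : ℝ, 0 ≤ θ → θ ≤ 1 → (a * Δt * θ) ^ 2 ≤ (a * Δt) ^ 2 := by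
    intro θ h0 h1
    rw [mul_pow]
    exact mul_le_of_le_one_right (sq_nonneg _) (pow_le_one₀ h0 h1)
  have hi : a * (1 + lam * c * Δt) ≤ 0 → ∀ n, (∫ ω, (X (n + 1) ω) ^ 2 ∂P)
        ≤ (1 + (a ^ 2 + lam ^ 2 * c ^ 2) * Δt ^ 2 + (b ^ 2 + lam * c * (2 + c)) * Δt)
            * ∫ ω, (X n ω) ^ 2 ∂P := by
    intro ha n
    refine integral_tamed_step P (X n) (X (n + 1)) (W n) (N n) a b c Δt (lam * Δt) _ hΔt hr
      (hWlaw n) (hNlaw n) (hWN n) (hXWN n) (hint n) (hrec n) fun θ h0 h1 => ?_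
    have h2 : a * (1 + lam * c * Δt) * (Δt * θ) ≤ 0 :=
      mul_nonpos_of_nonpos_of_nonneg ha (mul_nonneg hΔt.le h0)
    linarith [hθsq θ h0 h1]
  have hii : 0 < a * (1 + lam * c * Δt) → ∀ n, (∫ ω, (X (n + 1) ω) ^ 2 ∂P)
        ≤ (1 + (a + lam * c) ^ 2 * Δt ^ 2 + l * Δt) * ∫ ω, (X n ω) ^ 2 ∂P := by
    intro ha n
    refine integral_tamed_step P (X n) (X (n + 1)) (W n) (N n) a b c Δt (lam * Δt) _ hΔt hr
      (hWlaw n) (hNlaw n) (hWN n) (hXWN n) (hint n) (hrec n) fun θ h0 h1 => ?_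
    have h2 : a * (1 + lam * c * Δt) * Δt * θ ≤ a * (1 + lam * c * Δt) * Δt :=
      mul_le_of_le_one_right (mul_pos ha hΔt).le h1
    rw [hl]
    linarith [hθsq θ h0 h1]
  have hi' : (a ^ 2 + lam ^ 2 * c ^ 2) * Δt < 2 * a - l →
      1 + (a ^ 2 + lam ^ 2 * c ^ 2) * Δt ^ 2 + (b ^ 2 + lam * c * (2 + c)) * Δt < 1 := by
    intro h
    have h2 := mul_lt_mul_of_pos_right h hΔt
    rw [hl] at h2
    linarith
  have hii' : (a + lam * c) ^ 2 * Δt < -l →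
      1 + (a + lam * c) ^ 2 * Δt ^ 2 + l * Δt < 1 := by
    intro h
    have h2 := mul_lt_mul_of_pos_right h hΔt
    linarith
  -- The rate is `max K 0`, which avoids showing that the one-step factor `K` is nonnegative.
  have iter : ∀ K : ℝ, K < 1 →
      (∀ n, (∫ ω, (X (n + 1) ω) ^ 2 ∂P) ≤ K * ∫ ω, (X n ω) ^ 2 ∂P) →
      ∃ ρ : ℝ, 0 ≤ ρ ∧ ρ < 1 ∧
        ∀ n, (∫ ω, (X n ω) ^ 2 ∂P) ≤ ρ ^ n * ∫ ω, (X 0 ω) ^ 2 ∂P := by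
    intro K hK1 hK
    refine ⟨max K 0, le_max_right _ _, max_lt hK1 one_pos, fun n => ?_⟩
    induction n with
    | zero => simp
    | succ n ih =>
      calc (∫ ω, (X (n + 1) ω) ^ 2 ∂P) ≤ K * ∫ ω, (X n ω) ^ 2 ∂P := hK n
        _ ≤ max K 0 * ∫ ω, (X n ω) ^ 2 ∂P :=
          mul_le_mul_of_nonneg_right (le_max_left _ _) (integral_nonneg fun _ => sq_nonneg _)
        _ ≤ max K 0 * (max K 0 ^ n * ∫ ω, (X 0 ω) ^ 2 ∂P) :=
          mul_le_mul_of_nonneg_left ih (le_max_right _ _)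
        _ = max K 0 ^ (n + 1) * ∫ ω, (X 0 ω) ^ 2 ∂P := by ring
  refine ⟨⟨hi, hi'⟩, ⟨hii, hii'⟩, ?_⟩
  rintro (⟨h1, h2⟩ | ⟨h1, h2⟩)
  · exact iter _ (hi' h2) (hi h1)
  · exact iter _ (hii' h2) (hii h1)
end
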